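/- Let Λ be a finite set and X a subshift of Λ^{ℕ∪{0}} whose topological entropy h is strictly positive. Then for every 0 < r < 1 there exists L such that for every l ≥ L there exist two different words α and β of length l, both allowable in X, such that the overlap between α and β, the self-overlap of α, and the self-overlap of β are all smaller than r·l. -/

import Mathlib

open Filter Finset Topology

/-- The left shift on one-sided sequences. -/
def shiftN {Λ : Type*} (x : ℕ → Λ) : ℕ → Λ := fun n => x (n + 1)

/-- The word `w` occurs in `x` starting at coordinate `m`. -/
def OccursAt {Λ : Type*} (w : List Λ) (x : ℕ → Λ) (m : ℕ) : Prop :=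
  ∀ i : Fin w.length, x (m + (i : ℕ)) = w.get i

/-- The word `w` is allowable in `X`: it appears in some point of `X`. -/
def AllowableIn {Λ : Type*} (X : Set (ℕ → Λ)) (w : List Λ) : Prop :=
  ∃ x ∈ X, ∃ m : ℕ, OccursAt w x m

/-- The overlap between two different words `a` and `b`: the largest `k ≥ 1` such that the
last `k` letters of one of them coincide with the first `k` letters of the other (or `0` if
there is no such `k`). -/
noncomputable def wordOverlap {Λ : Type*} (a b : List Λ) : ℕ :=
  sSup ({k | 1 ≤ k ∧ k ≤ a.length ∧ k ≤ b.length ∧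
    (a.drop (a.length - k) = b.take k ∨ b.drop (b.length - k) = a.take k)} ∪ {0})

/-- The self-overlap of a word `a`: the largest `1 ≤ k < length a` such that the last `k`
letters of `a` coincide with its first `k` letters (or `0` if there is no such `k`). -/
noncomputable def selfOverlap {Λ : Type*} (a : List Λ) : ℕ :=
  sSup ({k | 1 ≤ k ∧ k < a.length ∧ a.drop (a.length - k) = a.take k} ∪ {0})

/-!
Let `p n` be the number of allowable words of length `n`. Once `k` is fixed, an allowable word of
length `l` having an overlap of length `k` with a given word, or with itself, is determined by
`l - k` consecutive letters, so there are at most `3 * p (l - k)` of them. By Fekete's lemma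
`log (p n) / n` converges to its infimum, which bounds the topological entropy from above and is
therefore positive; hence `p m` with `m ≤ (1 - r) * l` is exponentially smaller than `p l`. For
large `l`, the words excluded by overlaps of length at least `r * l` thus do not exhaust the
allowable words of length `l`: choose `α` with small self-overlap, and then `β` avoiding both
itself and `α`.
-/

section Words

variable {Λ : Type*} {a b : List Λ} {k : ℕ}

/-- The last `k` letters of `a` are the first `k` letters of `b`. This is the relation whose
largest `k` is recorded by `wordOverlap` and `selfOverlap`. -/
def HasOverlap (k : ℕ) (a b : List Λ) : Prop := a.drop (a.length - k) = b.take k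

lemma hasOverlap_length_self (a : List Λ) : HasOverlap a.length a a := by
  simp [HasOverlap]

lemma wordOverlap_lt {t : ℕ} (ht : 0 < t)
    (h : ∀ k, t ≤ k → k ≤ a.length → k ≤ b.length → ¬HasOverlap k a b ∧ ¬HasOverlap k b a) :
    wordOverlap a b < t := by
  refine (Nat.lt_iff_le_pred ht).2 (csSup_le ⟨0, Or.inr rfl⟩ ?_)
  rintro k (⟨-, hka, hkb, hab | hba⟩ | rfl)
  · exact Nat.le_pred_of_lt <| not_le.1 fun htk => (h k htk hka hkb).1 hab
  · exact Nat.le_pred_of_lt <| not_le.1 fun htk => (h k htk hka hkb).2 hba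
  · exact Nat.zero_le _

lemma selfOverlap_lt {t : ℕ} (ht : 0 < t)
    (h : ∀ k, t ≤ k → k < a.length → ¬HasOverlap k a a) : selfOverlap a < t := by
  refine (Nat.lt_iff_le_pred ht).2 (csSup_le ⟨0, Or.inr rfl⟩ ?_)
  rintro k (⟨-, hka, haa⟩ | rfl)
  · exact Nat.le_pred_of_lt <| not_le.1 fun htk => h k htk hka haa
  · exact Nat.zero_le _

lemma HasOverlap.hasPeriod (h : HasOverlap k a a) : a.HasPeriod (a.length - k) := by
  rw [List.HasPeriod]
  nth_rw 1 [← List.take_append_drop (a.length - k) a]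
  rw [List.prefix_append_right_inj, h]
  exact List.take_prefix k a

lemma eq_of_hasPeriod_of_take_eq {p : ℕ} (hp : 0 < p) (ha : a.HasPeriod p) (hb : b.HasPeriod p)
    (hlen : a.length = b.length) (h : a.take p = b.take p) : a = b := by
  refine List.ext_getElem?_iff.2 fun i => ?_
  rcases lt_or_ge i a.length with hi | hi
  · rw [← ha.getElem?_mod p i a hi, ← hb.getElem?_mod p i b (hlen ▸ hi),
      ← List.getElem?_take_of_lt (Nat.mod_lt i hp), h, List.getElem?_take_of_lt (Nat.mod_lt i hp)]
  · rw [List.getElem?_eq_none hi, List.getElem?_eq_none (hlen ▸ hi)]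

end Words

section Complexity

variable {Λ : Type*} {X : Set (ℕ → Λ)} {w : List Λ} {k l : ℕ}

lemma AllowableIn.of_infix {v : List Λ} (hw : AllowableIn X w) (hvw : v <:+: w) :
    AllowableIn X v := by
  obtain ⟨x, hx, m, hm⟩ := hw
  obtain ⟨s, t, rfl⟩ := hvw
  refine ⟨x, hx, m + s.length, fun i => ?_⟩
  have hi : s.length + i < (s ++ v ++ t).length := by simp; omega
  simpa [add_assoc] using hm ⟨s.length + i, hi⟩

/-- The words of length `n` in the language of `X`. -/
def allowableWords (X : Set (ℕ → Λ)) (n : ℕ) : Set (List Λ) :=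
  {w | w.length = n ∧ AllowableIn X w}

lemma allowableWords_finite [Finite Λ] (X : Set (ℕ → Λ)) (n : ℕ) : (allowableWords X n).Finite :=
  (List.finite_length_eq Λ n).subset fun _ hw => hw.1

lemma map_range_mem_allowableWords {x : ℕ → Λ} (hx : x ∈ X) (n : ℕ) :
    (List.range n).map x ∈ allowableWords X n :=
  ⟨by simp, x, hx, 0, fun i => by simp⟩

lemma take_mem_allowableWords (hw : w ∈ allowableWords X l) (hkl : k ≤ l) :
    w.take k ∈ allowableWords X k :=
  ⟨by simp [hw.1, hkl], hw.2.of_infix (w.take_prefix k).isInfix⟩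

lemma drop_mem_allowableWords (hw : w ∈ allowableWords X l) (k : ℕ) :
    w.drop k ∈ allowableWords X (l - k) :=
  ⟨by simp [hw.1], hw.2.of_infix (w.drop_suffix k).isInfix⟩

/-- The complexity function of `X`, counting the allowable words of length `n`. It is meaningful
for a finite alphabet; `Set.ncard` gives `0` if there are infinitely many words. -/
noncomputable def wordComplexity (X : Set (ℕ → Λ)) (n : ℕ) : ℕ := (allowableWords X n).ncard

variable [Finite Λ]

lemma wordComplexity_pos (hX : X.Nonempty) (n : ℕ) : 0 < wordComplexity X n :=
  (Set.ncard_pos (allowableWords_finite X n)).2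
    (hX.elim fun _ hx => ⟨_, map_range_mem_allowableWords hx n⟩)

lemma wordComplexity_add_le (X : Set (ℕ → Λ)) (m n : ℕ) :
    wordComplexity X (m + n) ≤ wordComplexity X m * wordComplexity X n := by
  unfold wordComplexity
  rw [← Set.ncard_prod]
  refine Set.ncard_le_ncard_of_injOn (fun w => (w.take m, w.drop m)) (fun w hw => ?_)
    (fun v _ w _ hvw => ?_) ((allowableWords_finite X m).prod (allowableWords_finite X n))
  · have hdrop := drop_mem_allowableWords hw m
    rw [Nat.add_sub_cancel_left] at hdrop
    exact ⟨take_mem_allowableWords hw (Nat.le_add_right m n), hdrop⟩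
  · obtain ⟨htake, hdrop⟩ := Prod.mk.inj hvw
    rw [← v.take_append_drop m, htake, hdrop, w.take_append_drop]

lemma ncard_hasOverlap_left_le (X : Set (ℕ → Λ)) (k l : ℕ) (a : List Λ) :
    {b ∈ allowableWords X l | HasOverlap k a b}.ncard ≤ wordComplexity X (l - k) := by
  refine Set.ncard_le_ncard_of_injOn (List.drop k)
    (fun b hb => drop_mem_allowableWords hb.1 k) ?_ (allowableWords_finite X _)
  intro b hb c hc hdrop
  have htake : b.take k = c.take k := hb.2.symm.trans hc.2
  rw [← b.take_append_drop k, htake, hdrop, c.take_append_drop]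

lemma ncard_hasOverlap_right_le (X : Set (ℕ → Λ)) (k l : ℕ) (a : List Λ) :
    {b ∈ allowableWords X l | HasOverlap k b a}.ncard ≤ wordComplexity X (l - k) := by
  refine Set.ncard_le_ncard_of_injOn (List.take (l - k))
    (fun b hb => take_mem_allowableWords hb.1 (Nat.sub_le l k)) ?_ (allowableWords_finite X _)
  intro b hb c hc htake
  have hdrop : b.drop (l - k) = c.drop (l - k) := by
    rw [← hb.1.1, hb.2, hb.1.1, ← hc.1.1, hc.2]
  rw [← b.take_append_drop (l - k), htake, hdrop, c.take_append_drop]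

lemma ncard_hasOverlap_self_le (X : Set (ℕ → Λ)) (hkl : k < l) :
    {b ∈ allowableWords X l | HasOverlap k b b}.ncard ≤ wordComplexity X (l - k) := by
  refine Set.ncard_le_ncard_of_injOn (List.take (l - k))
    (fun b hb => take_mem_allowableWords hb.1 (Nat.sub_le l k)) ?_ (allowableWords_finite X _)
  rintro b ⟨⟨rfl, -⟩, hb⟩ c ⟨⟨hlen, -⟩, hc⟩ htake
  exact eq_of_hasPeriod_of_take_eq (Nat.sub_pos_of_lt hkl) hb.hasPeriod (hlen ▸ hc.hasPeriod)
    hlen.symm htake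

/-- The allowable words of length `l` excluded by an overlap of length `k`, either with the given
word `a` or with themselves. -/
def overlappingWords (X : Set (ℕ → Λ)) (k l : ℕ) (a : List Λ) : Set (List Λ) :=
  {b ∈ allowableWords X l | HasOverlap k a b ∨ HasOverlap k b a ∨ k < l ∧ HasOverlap k b b}

lemma ncard_overlappingWords_le (X : Set (ℕ → Λ)) (k l : ℕ) (a : List Λ) :
    (overlappingWords X k l a).ncard ≤ 3 * wordComplexity X (l - k) := by
  have hself : {b ∈ allowableWords X l | k < l ∧ HasOverlap k b b}.ncard ≤
      wordComplexity X (l - k) := by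
    by_cases hkl : k < l
    · simpa only [hkl, true_and] using ncard_hasOverlap_self_le X hkl
    · simp [hkl]
  simp only [overlappingWords, Set.sep_or]
  calc _ ≤ _ + (_ + _) := (Set.ncard_union_le _ _).trans
        (Nat.add_le_add_left (Set.ncard_union_le _ _) _)
    _ ≤ wordComplexity X (l - k) + (wordComplexity X (l - k) + wordComplexity X (l - k)) := by
        gcongr
        exacts [ncard_hasOverlap_left_le X k l a, ncard_hasOverlap_right_le X k l a]
    _ = 3 * wordComplexity X (l - k) := by ring

lemma exists_mem_allowableWords_notMem_overlappingWords {t : ℕ}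
    (h : ∑ k ∈ Icc t l, 3 * wordComplexity X (l - k) < wordComplexity X l) (a : List Λ) :
    ∃ b ∈ allowableWords X l, ∀ k ∈ Icc t l, b ∉ overlappingWords X k l a := by
  by_contra! hcover
  have hsub : allowableWords X l ⊆ ⋃ k ∈ Icc t l, overlappingWords X k l a := fun b hb =>
    Set.mem_iUnion₂.2 <| by simpa only [exists_prop] using hcover b hb
  have hfin : (⋃ k ∈ Icc t l, overlappingWords X k l a).Finite :=
    (allowableWords_finite X l).subset <| Set.iUnion₂_subset fun _ _ => Set.sep_subset _ _
  refine h.not_ge ?_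
  calc wordComplexity X l
      ≤ (⋃ k ∈ Icc t l, overlappingWords X k l a).ncard := Set.ncard_le_ncard hsub hfin
    _ ≤ ∑ k ∈ Icc t l, (overlappingWords X k l a).ncard := Finset.set_ncard_biUnion_le _ _
    _ ≤ ∑ k ∈ Icc t l, 3 * wordComplexity X (l - k) :=
        sum_le_sum fun k _ => ncard_overlappingWords_le X k l a

lemma exists_mem_allowableWords_overlap_lt {t : ℕ} (ht : 0 < t) (htl : t ≤ l)
    (h : ∑ k ∈ Icc t l, 3 * wordComplexity X (l - k) < wordComplexity X l) (a : List Λ) :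
    ∃ b ∈ allowableWords X l, a ≠ b ∧ wordOverlap a b < t ∧ selfOverlap b < t := by
  obtain ⟨b, hb, hbk⟩ := exists_mem_allowableWords_notMem_overlappingWords h a
  obtain rfl : b.length = l := hb.1
  have hnot (k) (htk : t ≤ k) (hkl : k ≤ b.length) :
      ¬HasOverlap k a b ∧ ¬HasOverlap k b a ∧ (k < b.length → ¬HasOverlap k b b) := by
    simpa [overlappingWords, hb] using hbk k (mem_Icc.2 ⟨htk, hkl⟩)
  refine ⟨b, hb, ?_, wordOverlap_lt ht fun k htk _ hkb => ?_, selfOverlap_lt ht fun k htk hkb => ?_⟩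
  · rintro rfl
    exact (hnot _ htl le_rfl).1 (hasOverlap_length_self a)
  · exact ⟨(hnot k htk hkb).1, (hnot k htk hkb).2.1⟩
  · exact (hnot k htk hkb.le).2.2 hkb

end Complexity

section Entropy

variable {Λ : Type*}

lemma shiftN_iterate_apply (k : ℕ) (x : ℕ → Λ) (i : ℕ) : shiftN^[k] x i = x (i + k) := by
  induction k generalizing x with
  | zero => rfl
  | succ k ih => rw [Function.iterate_succ_apply, ih, shiftN, add_assoc]

lemma exists_forall_lt_eq_imp_mem_of_mem_uniformity [UniformSpace Λ]
    {U : Set ((ℕ → Λ) × (ℕ → Λ))} (hU : U ∈ uniformity (ℕ → Λ)) :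
    ∃ N : ℕ, ∀ x y : ℕ → Λ, (∀ i < N, x i = y i) → (x, y) ∈ U := by
  rw [Pi.uniformity] at hU
  obtain ⟨I, hI, V, hV, rfl⟩ := mem_iInf.1 hU
  obtain ⟨N, hN⟩ := hI.bddAbove
  refine ⟨N + 1, fun x y hxy => Set.mem_iInter.2 fun i => ?_⟩
  obtain ⟨W, hW, hWV⟩ := mem_comap.1 (hV i)
  refine hWV ?_
  change (x i, y i) ∈ W
  rw [hxy i (Nat.lt_succ_of_le (hN i.2))]
  exact refl_mem_uniformity hW

lemma bddBelow_range_log_wordComplexity_div (X : Set (ℕ → Λ)) :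
    BddBelow (Set.range fun n : ℕ => Real.log (wordComplexity X n) / n) :=
  ⟨0, Set.forall_mem_range.2 fun n => div_nonneg (Real.log_natCast_nonneg _) n.cast_nonneg⟩

variable [Finite Λ]

lemma coverMincard_shiftN_le {U : Set ((ℕ → Λ) × (ℕ → Λ))} {N : ℕ}
    (hU : ∀ x y : ℕ → Λ, (∀ i < N, x i = y i) → (x, y) ∈ U) (X : Set (ℕ → Λ)) (n : ℕ) :
    Dynamics.coverMincard shiftN X U n ≤ wordComplexity X (n + N) := by
  let w : (ℕ → Λ) → List Λ := fun x => (List.range (n + N)).map x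
  have hwX : w '' X ⊆ allowableWords X (n + N) :=
    Set.image_subset_iff.2 fun x hx => map_range_mem_allowableWords hx (n + N)
  obtain ⟨s, -, hs⟩ := X.exists_subset_bijOn w
  lift s to Finset (ℕ → Λ) using
    hs.finite_iff_finite.2 ((allowableWords_finite X (n + N)).subset hwX)
  have hcover : Dynamics.IsDynCoverOf shiftN X U n (s : Set (ℕ → Λ)) := by
    intro x hx
    obtain ⟨y, hy, hyx⟩ := hs.surjOn ⟨x, hx, rfl⟩
    have hxy : ∀ i < n + N, x i = y i := fun i hi =>
      (List.map_inj_left.1 hyx i (List.mem_range.2 hi)).symm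
    refine ⟨y, hy, Dynamics.mem_dynEntourage.2 fun k hk => hU _ _ fun i hi => ?_⟩
    rw [shiftN_iterate_apply, shiftN_iterate_apply, hxy _ (by omega)]
  have hcard : s.card ≤ wordComplexity X (n + N) := by
    rw [← Set.ncard_coe_finset, hs.ncard_eq]
    exact Set.ncard_le_ncard hwX (allowableWords_finite X _)
  exact hcover.coverMincard_le_card.trans (Nat.cast_le.2 hcard)

lemma ennreal_log_natCast_le (n : ℕ) : ENNReal.log n ≤ (Real.log n : ℝ) := by
  rw [← ENNReal.ofReal_natCast, ENNReal.log_ofReal]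
  split_ifs <;> simp

lemma subadditive_log_wordComplexity (X : Set (ℕ → Λ)) :
    Subadditive fun n => Real.log (wordComplexity X n) := by
  intro m n
  have hle : (wordComplexity X (m + n) : ℝ) ≤ wordComplexity X m * wordComplexity X n :=
    mod_cast wordComplexity_add_le X m n
  rcases Nat.eq_zero_or_pos (wordComplexity X (m + n)) with h0 | hpos
  · simp only [h0, Nat.cast_zero, Real.log_zero]
    exact add_nonneg (Real.log_natCast_nonneg _) (Real.log_natCast_nonneg _)
  · have hprod : (wordComplexity X m * wordComplexity X n : ℝ) ≠ 0 :=
      ((Nat.cast_pos.2 hpos).trans_le hle).ne'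
    rw [← Real.log_mul (left_ne_zero_of_mul hprod) (right_ne_zero_of_mul hprod)]
    exact Real.log_le_log (Nat.cast_pos.2 hpos) hle

lemma nonempty_of_lim_log_wordComplexity_pos {X : Set (ℕ → Λ)}
    (hlim : 0 < (subadditive_log_wordComplexity X).lim) : X.Nonempty := by
  have hpos := hlim.trans_le <| (subadditive_log_wordComplexity X).lim_le_div
    (bddBelow_range_log_wordComplexity_div X) one_ne_zero
  rw [Set.nonempty_iff_ne_empty]
  rintro rfl
  simp [wordComplexity, allowableWords, AllowableIn] at hpos

lemma coverEntropy_shiftN_le_lim [UniformSpace Λ] (X : Set (ℕ → Λ)) :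
    Dynamics.coverEntropy shiftN X ≤ ((subadditive_log_wordComplexity X).lim : ℝ) := by
  set u : ℕ → ℝ := fun n => Real.log (wordComplexity X n)
  have hsub : Subadditive u := subadditive_log_wordComplexity X
  refine iSup₂_le fun U hU => ?_
  obtain ⟨N, hN⟩ := exists_forall_lt_eq_imp_mem_of_mem_uniformity hU
  have hbound (n : ℕ) : ENNReal.log (Dynamics.coverMincard shiftN X U n) / n ≤
      ((u n / n + u N / n : ℝ) : EReal) := by
    have hcard : ((Dynamics.coverMincard shiftN X U n : ℕ∞) : ENNReal) ≤
        (wordComplexity X (n + N) : ℕ) := by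
      simpa using ENat.toENNReal_le.2 (coverMincard_shiftN_le hN X n)
    have hlog : ENNReal.log (Dynamics.coverMincard shiftN X U n) ≤ ((u n + u N : ℝ) : EReal) :=
      (ENNReal.log_monotone hcard).trans <| (ennreal_log_natCast_le _).trans <|
        EReal.coe_le_coe (hsub n N)
    rw [← add_div, EReal.coe_div]
    exact EReal.div_le_div_right_of_nonneg (by positivity) hlog
  have hlim : Tendsto (fun n : ℕ => u n / n + u N / n) atTop (𝓝 hsub.lim) := by
    simpa using (hsub.tendsto_lim (bddBelow_range_log_wordComplexity_div X)).add
      (tendsto_const_div_atTop_nhds_zero_nat (u N))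
  calc Dynamics.coverEntropyEntourage shiftN X U
      ≤ limsup (fun n : ℕ => ((u n / n + u N / n : ℝ) : EReal)) atTop :=
        limsup_le_limsup (Eventually.of_forall hbound)
    _ = hsub.lim := ((continuous_coe_real_ereal.tendsto _).comp hlim).limsup_eq

end Entropy

section Growth

lemma exists_forall_le_add_mul_of_tendsto_div {u : ℕ → ℝ} {h c : ℝ}
    (hu : Tendsto (fun n : ℕ => u n / n) atTop (𝓝 h)) (hc : h < c) :
    ∃ C, ∀ n : ℕ, u n ≤ C + c * n := by
  have hev : ∀ᶠ n : ℕ in atTop, u n - c * n ≤ 0 := by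
    filter_upwards [hu.eventually_lt_const hc, eventually_gt_atTop 0] with n hn hpos
    exact sub_nonpos.2 ((div_lt_iff₀ (Nat.cast_pos.2 hpos)).1 hn).le
  obtain ⟨C, hC⟩ := (isBoundedUnder_of_eventually_le hev).bddAbove_range
  exact ⟨C, fun n => sub_le_iff_le_add.1 (hC ⟨n, rfl⟩)⟩

lemma eventually_add_le_of_subadditive {u v : ℕ → ℝ} (hu : Subadditive u)
    (hbdd : BddBelow (Set.range fun n => u n / n)) (hlim : 0 < hu.lim)
    (hv : v =o[atTop] fun n : ℕ => (n : ℝ)) {r : ℝ} (hr : 0 < r) :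
    ∀ᶠ l : ℕ in atTop, ∀ m : ℕ, (m : ℝ) ≤ (1 - r) * l → v l + u m ≤ u l := by
  set h := hu.lim
  obtain ⟨C, hC⟩ := exists_forall_le_add_mul_of_tendsto_div (hu.tendsto_lim hbdd)
    (show h < h * (1 + r) by nlinarith)
  have hvC : (fun l : ℕ => v l + C) =o[atTop] fun l : ℕ => (l : ℝ) :=
    hv.add ((Asymptotics.isLittleO_const_id_atTop C).comp_tendsto tendsto_natCast_atTop_atTop)
  filter_upwards [hvC.def (show 0 < h * r ^ 2 by positivity), eventually_ne_atTop 0]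
    with l hvl hl m hm
  have hsmall : v l + C ≤ h * r ^ 2 * l := by simpa using (le_abs_self _).trans hvl
  have hlower : h * l ≤ u l := by
    have := hu.lim_le_div hbdd hl
    rwa [le_div_iff₀ (by positivity)] at this
  calc v l + u m
      ≤ v l + (C + h * (1 + r) * m) := by gcongr; exact hC m
    _ ≤ v l + (C + h * (1 + r) * ((1 - r) * l)) := by gcongr
    _ = v l + C - h * r ^ 2 * l + h * l := by ring
    _ ≤ u l := by linarith

variable {Λ : Type*} [Finite Λ] {X : Set (ℕ → Λ)} {r : ℝ}

lemma eventually_pow_mul_wordComplexity_le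
    (hlim : 0 < (subadditive_log_wordComplexity X).lim) (hr : 0 < r) (d : ℕ) :
    ∀ᶠ l : ℕ in atTop, ∀ m : ℕ, (m : ℝ) ≤ (1 - r) * l →
      l ^ d * wordComplexity X m ≤ wordComplexity X l := by
  have hlog : (fun l : ℕ => d * Real.log l) =o[atTop] fun l : ℕ => (l : ℝ) :=
    (Real.isLittleO_log_id_atTop.comp_tendsto tendsto_natCast_atTop_atTop).const_mul_left _
  filter_upwards [eventually_add_le_of_subadditive _ (bddBelow_range_log_wordComplexity_div X)
    hlim hlog hr, eventually_gt_atTop 0] with l hl hpos m hm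
  have hX := nonempty_of_lim_log_wordComplexity_pos hlim
  have hm0 := wordComplexity_pos hX m
  have hl0 := wordComplexity_pos hX l
  have hle : Real.log (l ^ d * wordComplexity X m) ≤ Real.log (wordComplexity X l) := by
    rw [Real.log_mul (by positivity) (by positivity), Real.log_pow]
    exact hl m hm
  exact_mod_cast (Real.log_le_log_iff (by positivity) (by positivity)).1 hle

lemma eventually_sum_wordComplexity_lt
    (hlim : 0 < (subadditive_log_wordComplexity X).lim) (hr : 0 < r) :
    ∀ᶠ l : ℕ in atTop,
      ∑ k ∈ Icc ⌈r * l⌉₊ l, 3 * wordComplexity X (l - k) < wordComplexity X l := by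
  filter_upwards [eventually_pow_mul_wordComplexity_le hlim hr 2, eventually_ge_atTop 4]
    with l hl hl4
  have hterm (k) (hk : k ∈ Icc ⌈r * l⌉₊ l) :
      l ^ 2 * wordComplexity X (l - k) ≤ wordComplexity X l := by
    obtain ⟨hrk, hkl⟩ := mem_Icc.1 hk
    refine hl (l - k) ?_
    rw [Nat.cast_sub hkl]
    linarith [Nat.ceil_le.1 hrk]
  have hcard : #(Icc ⌈r * l⌉₊ l) ≤ l := by
    have : 0 < ⌈r * l⌉₊ := Nat.ceil_pos.2 (by positivity)
    rw [Nat.card_Icc]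
    omega
  refine Nat.lt_of_mul_lt_mul_left (a := l ^ 2) ?_
  calc l ^ 2 * ∑ k ∈ Icc ⌈r * l⌉₊ l, 3 * wordComplexity X (l - k)
      = ∑ k ∈ Icc ⌈r * l⌉₊ l, 3 * (l ^ 2 * wordComplexity X (l - k)) := by
        rw [mul_sum]; exact sum_congr rfl fun _ _ => by ring
    _ ≤ #(Icc ⌈r * l⌉₊ l) • (3 * wordComplexity X l) :=
        sum_le_card_nsmul _ _ _ fun k hk => Nat.mul_le_mul_left 3 (hterm k hk)
    _ ≤ l * (3 * wordComplexity X l) := Nat.mul_le_mul_right _ hcard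
    _ < l ^ 2 * wordComplexity X l := by
        have hpos := wordComplexity_pos (nonempty_of_lim_log_wordComplexity_pos hlim) l
        nlinarith [Nat.mul_pos (by omega : 0 < l) hpos]

end Growth

theorem statement_10_general
    {Λ : Type*} [Finite Λ] [UniformSpace Λ] (X : Set (ℕ → Λ))
    (hent : 0 < Dynamics.coverEntropy shiftN X) (r : ℝ) (hr0 : 0 < r) (hr1 : r < 1) :
    ∃ L : ℕ, ∀ l ≥ L, ∃ α β : List Λ,
      α.length = l ∧ β.length = l ∧ α ≠ β ∧
      AllowableIn X α ∧ AllowableIn X β ∧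
      (wordOverlap α β : ℝ) < r * l ∧
      (selfOverlap α : ℝ) < r * l ∧ (selfOverlap β : ℝ) < r * l := by
  have hlim : 0 < (subadditive_log_wordComplexity X).lim :=
    EReal.coe_pos.1 (hent.trans_le (coverEntropy_shiftN_le_lim X))
  obtain ⟨L, hL⟩ := eventually_atTop.1
    ((eventually_sum_wordComplexity_lt hlim hr0).and (eventually_gt_atTop 0))
  refine ⟨L, fun l hl => ?_⟩
  obtain ⟨hsum, hl0⟩ := hL l hl
  have ht : 0 < ⌈r * l⌉₊ := Nat.ceil_pos.2 (by positivity)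
  have htl : ⌈r * l⌉₊ ≤ l := Nat.ceil_le.2 (mul_le_of_le_one_left l.cast_nonneg hr1.le)
  obtain ⟨α, hα, -, -, hαself⟩ := exists_mem_allowableWords_overlap_lt ht htl hsum []
  obtain ⟨β, hβ, hne, hαβ, hβself⟩ := exists_mem_allowableWords_overlap_lt ht htl hsum α
  exact ⟨α, β, hα.1, hβ.1, hne, hα.2, hβ.2,
    Nat.lt_ceil.1 hαβ, Nat.lt_ceil.1 hαself, Nat.lt_ceil.1 hβself⟩

theorem statement_10
    {Λ : Type*} [Fintype Λ] [UniformSpace Λ] [DiscreteTopology Λ]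
    (X : Set (ℕ → Λ)) (hclosed : IsClosed X) (hinv : Set.MapsTo shiftN X X)
    (hent : 0 < Dynamics.coverEntropy shiftN X)
    (r : ℝ) (hr0 : 0 < r) (hr1 : r < 1) :
    ∃ L : ℕ, ∀ l ≥ L, ∃ α β : List Λ,
      α.length = l ∧ β.length = l ∧ α ≠ β ∧
      AllowableIn X α ∧ AllowableIn X β ∧
      (wordOverlap α β : ℝ) < r * l ∧
      (selfOverlap α : ℝ) < r * l ∧ (selfOverlap β : ℝ) < r * l := by
  exact statement_10_general X hent r hr0 hr1
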